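/- Let α, β > −1, n ≥ 1, let u : ℝ → ℝ be twice differentiable, and let x_0,…,x_n be distinct points such that u(x_0) = −1, u(x_1),…,u(x_n) are the n distinct roots of the Jacobi polynomial G = P_n^{α,β+1}, u(x_0),…,u(x_n) are pairwise distinct, and u'(x_i) ≠ 0 for all i. Let L_j be the generalized Lagrange functions on these nodes and D the matrix with entries d_{kj} = L_j'(x_k). Then for every k with 1 ≤ k ≤ n, the entry in the first column satisfies d_{k0} = u'(x_k) · P_{n−1}^{α+1,β+2}(u(x_k)) · n! · (α+β+n+2) · Γ(β+2) / (2 (−1)^n Γ(β+2+n)). -/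

import Mathlib

/-- Jacobi polynomials `P_n^{α,β}` defined by the three-term recurrence. -/
noncomputable def jacobiP (α β : ℝ) : ℕ → ℝ → ℝ
  | 0, _ => 1
  | 1, x => (α + β + 2) * x / 2 + (α - β) / 2
  | K + 2, x =>
      ((2 * ((K : ℝ) + 1) + α + β + 1) * (2 * ((K : ℝ) + 1) + α + β + 2) /
            (2 * (((K : ℝ) + 1) + 1) * (((K : ℝ) + 1) + α + β + 1)) * x -
          (β ^ 2 - α ^ 2) * (2 * ((K : ℝ) + 1) + α + β + 1) /
            (2 * (((K : ℝ) + 1) + 1) * (((K : ℝ) + 1) + α + β + 1) *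
              (2 * ((K : ℝ) + 1) + α + β))) *
        jacobiP α β (K + 1) x -
      (((K : ℝ) + 1) + α) * (((K : ℝ) + 1) + β) * (2 * ((K : ℝ) + 1) + α + β + 2) /
            ((((K : ℝ) + 1) + 1) * (((K : ℝ) + 1) + α + β + 1) * (2 * ((K : ℝ) + 1) + α + β)) *
        jacobiP α β K x

open Finset

/-- `glW u x t = ∏ i, (u t − u (x i))`. -/
noncomputable def glW (u : ℝ → ℝ) {n : ℕ} (x : Fin (n + 1) → ℝ) : ℝ → ℝ :=
  fun t => ∏ i, (u t - u (x i))

/-- Generalized Lagrange function `L_j(t) = κ_j ∏_{i ≠ j} (u t − u (x i))`,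
with `κ_j = u'(x_j) / w'(x_j)`. -/
noncomputable def glL (u : ℝ → ℝ) {n : ℕ} (x : Fin (n + 1) → ℝ) (j : Fin (n + 1)) : ℝ → ℝ :=
  fun t => (deriv u (x j) / deriv (glW u x) (x j)) *
    ∏ i ∈ Finset.univ.erase j, (u t - u (x i))

/-!
About the point `-1`, the Jacobi polynomial `P_n^{a,b}` is `(-1)ⁿ (b+1)ₙ / n!` times the terminating
hypergeometric polynomial `₂F₁(-n, n+a+b+1; b+1; y)` in `y = (x+1)/2`: both satisfy the same
three-term recurrence. The expansion gives the value at `-1`, the degree, and the derivative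
`(P_{n+1}^{a,b})' = (n+a+b+2)/2 · P_n^{a+1,b+1}`.

A generalized Lagrange function is an ordinary Lagrange basis polynomial on the nodes `u (x i)`,
composed with `u`. Since `P = P_n^{α,β+1}` has degree at most `n` and vanishes at every node except
`u (x 0) = -1`, uniqueness of interpolation gives `L₀ = P ∘ u / P(-1)`, which is then differentiated
by the chain rule.
-/

section Hypergeometric

open Polynomial

variable {𝕂 : Type*} [Field 𝕂]

theorem ascPochhammer_eval_succ_left {S : Type*} [CommSemiring S] (k : ℕ) (z : S) :
    (ascPochhammer S (k + 1)).eval z = z * (ascPochhammer S k).eval (z + 1) := by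
  simp [ascPochhammer_succ_left, eval_comp]

theorem mul_ascPochhammer_eval_add_one {S : Type*} [CommSemiring S] (k : ℕ) (z : S) :
    z * (ascPochhammer S k).eval (z + 1) = (z + k) * (ascPochhammer S k).eval z := by
  rw [← ascPochhammer_eval_succ_left, ascPochhammer_succ_eval, mul_comm]

theorem ordinaryHypergeometricCoefficient_comm (a b c : 𝕂) (k : ℕ) :
    ordinaryHypergeometricCoefficient a b c k = ordinaryHypergeometricCoefficient b a c k := by
  unfold ordinaryHypergeometricCoefficient
  ring

theorem ordinaryHypergeometricCoefficient_succ (a b c : 𝕂) (k : ℕ) :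
    ordinaryHypergeometricCoefficient a b c (k + 1) =
      (a + k) * (b + k) / ((c + k) * (k + 1)) * ordinaryHypergeometricCoefficient a b c k := by
  simp only [ordinaryHypergeometricCoefficient, ascPochhammer_succ_eval, Nat.factorial_succ,
    Nat.cast_mul, Nat.cast_succ, mul_inv, div_eq_mul_inv]
  ring

theorem mul_ordinaryHypergeometricCoefficient_add_one (a b c : 𝕂) (k : ℕ) :
    a * ordinaryHypergeometricCoefficient (a + 1) b c k =
      (a + k) * ordinaryHypergeometricCoefficient a b c k := by
  unfold ordinaryHypergeometricCoefficient
  linear_combination (k.factorial⁻¹ : 𝕂) * (ascPochhammer 𝕂 k).eval b *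
    ((ascPochhammer 𝕂 k).eval c)⁻¹ * mul_ascPochhammer_eval_add_one k a

theorem ordinaryHypergeometricCoefficient_succ_left (a b c : 𝕂) (k : ℕ) :
    ordinaryHypergeometricCoefficient a b c (k + 1) =
      a * (b + k) / ((c + k) * (k + 1)) * ordinaryHypergeometricCoefficient (a + 1) b c k := by
  rw [ordinaryHypergeometricCoefficient_succ]
  linear_combination -((b + k) / ((c + k) * (k + 1))) *
    mul_ordinaryHypergeometricCoefficient_add_one a b c k

theorem ordinaryHypergeometricCoefficient_succ_mul [CharZero 𝕂] (a b c : 𝕂) (k : ℕ) :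
    ordinaryHypergeometricCoefficient a b c (k + 1) * (k + 1) =
      a * b / c * ordinaryHypergeometricCoefficient (a + 1) (b + 1) (c + 1) k := by
  simp only [ordinaryHypergeometricCoefficient, ascPochhammer_eval_succ_left, Nat.factorial_succ,
    Nat.cast_mul, Nat.cast_succ, mul_inv]
  field_simp

theorem ordinaryHypergeometricCoefficient_neg_nat_of_lt {n k : ℕ} (h : n < k) (b c : 𝕂) :
    ordinaryHypergeometricCoefficient (-(n : 𝕂)) b c k = 0 := by
  simp [ordinaryHypergeometricCoefficient, ascPochhammer_eval_neg_coe_nat_of_lt h]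

theorem gamma_add_nat_eq_ascPochhammer_mul {z : ℝ} (hz : ∀ m : ℕ, z ≠ -m) (n : ℕ) :
    Real.Gamma (z + n) = (ascPochhammer ℝ n).eval z * Real.Gamma z := by
  induction n with
  | zero => simp
  | succ n ih =>
    have hzn : z + n ≠ 0 := fun h ↦ hz n (eq_neg_of_add_eq_zero_left h)
    rw [Nat.cast_succ, ← add_assoc, Real.Gamma_add_one hzn, ih, ascPochhammer_succ_eval]
    ring

end Hypergeometric

section JacobiCoefficients

variable {a b : ℝ}

/-- The coefficient `a_k` of the Jacobi recurrence
`P_{k+1} = (a_k x - b_k) P_k - c_k P_{k-1}`. -/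
noncomputable def jacobiRecA (a b k : ℝ) : ℝ :=
  (2 * k + a + b + 1) * (2 * k + a + b + 2) / (2 * (k + 1) * (k + a + b + 1))

/-- The coefficient `b_k` of the Jacobi recurrence
`P_{k+1} = (a_k x - b_k) P_k - c_k P_{k-1}`. -/
noncomputable def jacobiRecB (a b k : ℝ) : ℝ :=
  (b ^ 2 - a ^ 2) * (2 * k + a + b + 1) / (2 * (k + 1) * (k + a + b + 1) * (2 * k + a + b))

/-- The coefficient `c_k` of the Jacobi recurrence
`P_{k+1} = (a_k x - b_k) P_k - c_k P_{k-1}`. -/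
noncomputable def jacobiRecC (a b k : ℝ) : ℝ :=
  (k + a) * (k + b) * (2 * k + a + b + 2) / ((k + 1) * (k + a + b + 1) * (2 * k + a + b))

theorem jacobiP_add_two (a b : ℝ) (n : ℕ) (x : ℝ) :
    jacobiP a b (n + 2) x =
      (jacobiRecA a b (n + 1) * x - jacobiRecB a b (n + 1)) * jacobiP a b (n + 1) x -
        jacobiRecC a b (n + 1) * jacobiP a b n x :=
  rfl

/-- The value `(-1)ⁿ (b+1)ₙ / n!` of the Jacobi polynomial `P_n^{a,b}` at `-1`, which does not
depend on `a`; see `jacobiP_neg_one`. -/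
noncomputable def jacobiNegOne (b : ℝ) (n : ℕ) : ℝ :=
  (-1) ^ n * (ascPochhammer ℝ n).eval (b + 1) / n.factorial

theorem jacobiNegOne_succ (b : ℝ) (n : ℕ) :
    jacobiNegOne b (n + 1) = -((b + 1 + n) / (n + 1)) * jacobiNegOne b n := by
  simp only [jacobiNegOne, ascPochhammer_succ_eval, Nat.factorial_succ, Nat.cast_mul,
    Nat.cast_succ]
  field_simp
  ring

theorem jacobiNegOne_ne_zero (hb : ∀ m : ℕ, b + 1 ≠ -m) (n : ℕ) : jacobiNegOne b n ≠ 0 := by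
  induction n with
  | zero => simp [jacobiNegOne]
  | succ n ih =>
    have hbn : b + 1 + n ≠ 0 := fun h ↦ hb n (eq_neg_of_add_eq_zero_left h)
    rw [jacobiNegOne_succ]
    exact mul_ne_zero (neg_ne_zero.2 (div_ne_zero hbn n.cast_add_one_ne_zero)) ih

theorem factorial_mul_gamma_div_gamma_add (hb : ∀ m : ℕ, b + 1 ≠ -m) (n : ℕ) :
    n.factorial * Real.Gamma (b + 1) / ((-1) ^ n * Real.Gamma (b + 1 + n)) =
      (jacobiNegOne b n)⁻¹ := by
  have hΓ : Real.Gamma (b + 1) ≠ 0 := Real.Gamma_ne_zero hb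
  rw [gamma_add_nat_eq_ascPochhammer_mul hb, jacobiNegOne]
  field_simp

/-- The coefficient of `((x + 1) / 2) ^ k` in the Jacobi polynomial `P_n^{a,b}(x)`. It agrees with
that of the recursively defined `jacobiP` when the denominators occurring in the recurrence and in
the hypergeometric coefficient do not vanish. -/
noncomputable def jacobiCoeff (a b : ℝ) (n k : ℕ) : ℝ :=
  jacobiNegOne b n * ordinaryHypergeometricCoefficient (-n : ℝ) (n + a + b + 1) (b + 1) k

theorem jacobiCoeff_of_lt {n k : ℕ} (h : n < k) : jacobiCoeff a b n k = 0 := by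
  rw [jacobiCoeff, ordinaryHypergeometricCoefficient_neg_nat_of_lt h, mul_zero]

theorem jacobiCoeff_zero_right (a b : ℝ) (n : ℕ) : jacobiCoeff a b n 0 = jacobiNegOne b n := by
  simp [jacobiCoeff, ordinaryHypergeometricCoefficient]

theorem jacobiCoeff_succ_right (a b : ℝ) (n k : ℕ) :
    jacobiCoeff a b n (k + 1) =
      (k - n) * (n + a + b + 1 + k) / ((b + 1 + k) * (k + 1)) * jacobiCoeff a b n k := by
  rw [jacobiCoeff, ordinaryHypergeometricCoefficient_succ, jacobiCoeff]
  ring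

theorem jacobiCoeff_succ_succ {n : ℕ} (hn : n + a + b + 1 ≠ 0) (k : ℕ) :
    jacobiCoeff a b (n + 1) (k + 1) =
      (b + 1 + n) * (n + a + b + 1 + k) * (n + a + b + 2 + k) /
        ((n + a + b + 1) * ((b + 1 + k) * (k + 1))) * jacobiCoeff a b n k := by
  have hraise := ordinaryHypergeometricCoefficient_succ_left
    (-((n + 1 : ℕ) : ℝ)) ((n + 1 : ℕ) + a + b + 1) (b + 1) k
  have hshift := mul_ordinaryHypergeometricCoefficient_add_one (n + a + b + 1) (-n) (b + 1) k
  rw [show -((n + 1 : ℕ) : ℝ) + 1 = -n by push_cast; ring,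
    show ((n + 1 : ℕ) : ℝ) + a + b + 1 = n + a + b + 1 + 1 by push_cast; ring,
    ordinaryHypergeometricCoefficient_comm (-n : ℝ),
    eq_div_of_mul_eq hn ((mul_comm _ _).trans hshift)] at hraise
  rw [jacobiCoeff, show ((n + 1 : ℕ) : ℝ) + a + b + 1 = n + a + b + 1 + 1 by push_cast; ring,
    hraise, jacobiNegOne_succ, jacobiCoeff, ordinaryHypergeometricCoefficient_comm (-n : ℝ)]
  push_cast
  field_simp
  ring

theorem jacobiCoeff_succ_right_eq_mul_succ_left {n : ℕ} (hn : b + 1 + n ≠ 0) (k : ℕ) :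
    jacobiCoeff a b n (k + 1) =
      (k - n - 1) * (k - n) * (n + a + b + 1) / ((b + 1 + n) * ((b + 1 + k) * (k + 1))) *
        jacobiCoeff a b (n + 1) k := by
  have hn' : (n : ℝ) + 1 ≠ 0 := n.cast_add_one_ne_zero
  have hraise := ordinaryHypergeometricCoefficient_succ_left
    (n + a + b + 1) (-n : ℝ) (b + 1) k
  have hshift := mul_ordinaryHypergeometricCoefficient_add_one
    (-(n + 1) : ℝ) (n + a + b + 1 + 1) (b + 1) k
  rw [show -((n : ℝ) + 1) + 1 = -n by ring] at hshift
  rw [jacobiCoeff, ordinaryHypergeometricCoefficient_comm, hraise,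
    ordinaryHypergeometricCoefficient_comm,
    eq_div_of_mul_eq (neg_ne_zero.2 hn') ((mul_comm _ _).trans hshift), jacobiCoeff,
    jacobiNegOne_succ, Nat.cast_succ,
    show (n : ℝ) + 1 + a + b + 1 = n + a + b + 1 + 1 by ring]
  field_simp
  ring

theorem jacobiNegOne_succ_eq_mul_add_one (b : ℝ) (n : ℕ) :
    jacobiNegOne b (n + 1) = -((b + 1) / (n + 1)) * jacobiNegOne (b + 1) n := by
  simp only [jacobiNegOne, ascPochhammer_eval_succ_left, Nat.factorial_succ, Nat.cast_mul,
    Nat.cast_succ]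
  field_simp
  ring

theorem jacobiCoeff_succ_succ_mul (hb : b + 1 ≠ 0) (n k : ℕ) :
    jacobiCoeff a b (n + 1) (k + 1) * (k + 1) =
      (n + a + b + 2) * jacobiCoeff (a + 1) (b + 1) n k := by
  rw [jacobiCoeff, mul_assoc, ordinaryHypergeometricCoefficient_succ_mul,
    jacobiNegOne_succ_eq_mul_add_one, jacobiCoeff,
    show -((n + 1 : ℕ) : ℝ) + 1 = -n by push_cast; ring,
    show ((n + 1 : ℕ) : ℝ) + a + b + 1 + 1 = n + (a + 1) + (b + 1) + 1 by push_cast; ring]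
  push_cast
  field_simp
  ring

theorem jacobiCoeff_add_two_zero (hab : ∀ m : ℕ, a + b + 2 ≠ -m) (n : ℕ) :
    jacobiCoeff a b (n + 2) 0 =
      -(jacobiRecA a b (n + 1) + jacobiRecB a b (n + 1)) * jacobiCoeff a b (n + 1) 0 -
        jacobiRecC a b (n + 1) * jacobiCoeff a b n 0 := by
  have h₁ : (n : ℝ) + 1 + a + b + 1 ≠ 0 := fun h ↦ hab n (by linear_combination h)
  have h₂ : ((n : ℝ) + 1) * 2 + a + b ≠ 0 := fun h ↦
    hab (2 * n) (by push_cast; linear_combination h)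
  simp only [jacobiCoeff_zero_right, jacobiNegOne_succ, jacobiRecA, jacobiRecB, jacobiRecC]
  push_cast
  field_simp
  ring

theorem jacobiCoeff_add_two_succ (hb : ∀ m : ℕ, b + 1 ≠ -m) (hab : ∀ m : ℕ, a + b + 2 ≠ -m)
    (n k : ℕ) :
    jacobiCoeff a b (n + 2) (k + 1) =
      2 * jacobiRecA a b (n + 1) * jacobiCoeff a b (n + 1) k -
        (jacobiRecA a b (n + 1) + jacobiRecB a b (n + 1)) * jacobiCoeff a b (n + 1) (k + 1) -
        jacobiRecC a b (n + 1) * jacobiCoeff a b n (k + 1) := by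
  have h₁ : (n : ℝ) + 1 + a + b + 1 ≠ 0 := fun h ↦ hab n (by linear_combination h)
  have h₂ : ((n : ℝ) + 1) * 2 + a + b ≠ 0 := fun h ↦
    hab (2 * n) (by push_cast; linear_combination h)
  have hbn : b + 1 + n ≠ 0 := fun h ↦ hb n (eq_neg_of_add_eq_zero_left h)
  have hbk : b + 1 + k ≠ 0 := fun h ↦ hb k (eq_neg_of_add_eq_zero_left h)
  -- Every coefficient is an explicit rational multiple of `jacobiCoeff a b (n + 1) k`.
  rw [jacobiCoeff_succ_succ (by rwa [Nat.cast_succ]), jacobiCoeff_succ_right a b (n + 1),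
    jacobiCoeff_succ_right_eq_mul_succ_left hbn, jacobiRecA, jacobiRecB, jacobiRecC]
  push_cast
  field_simp
  ring

end JacobiCoefficients

section JacobiPolynomial

open Polynomial

variable {a b : ℝ}

/-- The Jacobi polynomial `P_n^{a,b}` written in the variable `y = (x + 1) / 2`, so that its
expansion at `y = 0` is the expansion of `jacobiP a b n` at `x = -1`. -/
noncomputable def shiftedJacobiPoly (a b : ℝ) (n : ℕ) : ℝ[X] :=
  ∑ k ∈ range (n + 1), monomial k (jacobiCoeff a b n k)

theorem coeff_shiftedJacobiPoly (a b : ℝ) (n k : ℕ) :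
    (shiftedJacobiPoly a b n).coeff k = jacobiCoeff a b n k := by
  simp only [shiftedJacobiPoly, finsetSum_coeff, coeff_monomial, sum_ite_eq', mem_range,
    ite_eq_left_iff, not_lt]
  exact fun h ↦ (jacobiCoeff_of_lt h).symm

theorem natDegree_shiftedJacobiPoly_le (a b : ℝ) (n : ℕ) :
    (shiftedJacobiPoly a b n).natDegree ≤ n :=
  natDegree_le_iff_coeff_eq_zero.2 fun k hk ↦ by
    rw [coeff_shiftedJacobiPoly, jacobiCoeff_of_lt hk]

/-- This is `jacobiP_add_two` after the substitution `x = 2 * y - 1`. -/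
theorem shiftedJacobiPoly_add_two (hb : ∀ m : ℕ, b + 1 ≠ -m) (hab : ∀ m : ℕ, a + b + 2 ≠ -m)
    (n : ℕ) :
    shiftedJacobiPoly a b (n + 2) =
      (C (2 * jacobiRecA a b (n + 1)) * X - C (jacobiRecA a b (n + 1) + jacobiRecB a b (n + 1))) *
          shiftedJacobiPoly a b (n + 1) -
        C (jacobiRecC a b (n + 1)) * shiftedJacobiPoly a b n := by
  ext k
  rw [sub_mul, mul_assoc]
  cases k with
  | zero =>
    simp only [coeff_sub, coeff_C_mul, coeff_X_mul_zero, coeff_shiftedJacobiPoly,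
      jacobiCoeff_add_two_zero hab]
    ring
  | succ k =>
    simp only [coeff_sub, coeff_C_mul, coeff_X_mul, coeff_shiftedJacobiPoly,
      jacobiCoeff_add_two_succ hb hab]

theorem derivative_shiftedJacobiPoly_succ (hb : b + 1 ≠ 0) (n : ℕ) :
    derivative (shiftedJacobiPoly a b (n + 1)) =
      C (n + a + b + 2) * shiftedJacobiPoly (a + 1) (b + 1) n := by
  ext k
  rw [coeff_derivative, coeff_C_mul, coeff_shiftedJacobiPoly, coeff_shiftedJacobiPoly,
    jacobiCoeff_succ_succ_mul hb]

theorem eval_shiftedJacobiPoly_one (hb : b + 1 ≠ 0) (x : ℝ) :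
    (shiftedJacobiPoly a b 1).eval ((x + 1) / 2) = jacobiP a b 1 x := by
  have hcoeff₀ : jacobiCoeff a b 1 0 = -(b + 1) := by
    simp [jacobiCoeff_zero_right, jacobiNegOne]
  have hcoeff₁ : jacobiCoeff a b 1 1 = a + b + 2 := by
    rw [jacobiCoeff_succ_right, hcoeff₀]
    simp only [Nat.cast_zero, Nat.cast_one, add_zero]
    field_simp
    ring
  calc (shiftedJacobiPoly a b 1).eval ((x + 1) / 2)
      = jacobiCoeff a b 1 0 + jacobiCoeff a b 1 1 * ((x + 1) / 2) := by
        simp [shiftedJacobiPoly, sum_range_succ]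
    _ = jacobiP a b 1 x := by
        rw [hcoeff₀, hcoeff₁, jacobiP]
        ring

theorem eval_shiftedJacobiPoly (hb : ∀ m : ℕ, b + 1 ≠ -m) (hab : ∀ m : ℕ, a + b + 2 ≠ -m)
    (n : ℕ) (x : ℝ) : (shiftedJacobiPoly a b n).eval ((x + 1) / 2) = jacobiP a b n x := by
  induction n using Nat.twoStepInduction with
  | zero => simp [shiftedJacobiPoly, jacobiCoeff_zero_right, jacobiNegOne, jacobiP]
  | one => exact eval_shiftedJacobiPoly_one (by simpa using hb 0) x
  | more n ih₀ ih₁ =>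
    rw [shiftedJacobiPoly_add_two hb hab, jacobiP_add_two, ← ih₀, ← ih₁]
    simp only [eval_sub, eval_mul, eval_C, eval_X]
    ring

theorem jacobiP_neg_one (hb : ∀ m : ℕ, b + 1 ≠ -m) (hab : ∀ m : ℕ, a + b + 2 ≠ -m) (n : ℕ) :
    jacobiP a b n (-1) = jacobiNegOne b n := by
  rw [← eval_shiftedJacobiPoly hb hab, neg_add_cancel, zero_div, ← coeff_zero_eq_eval_zero,
    coeff_shiftedJacobiPoly, jacobiCoeff_zero_right]

theorem hasDerivAt_jacobiP_succ (hb : ∀ m : ℕ, b + 1 ≠ -m) (hab : ∀ m : ℕ, a + b + 2 ≠ -m)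
    (n : ℕ) (x : ℝ) :
    HasDerivAt (jacobiP a b (n + 1)) ((n + a + b + 2) / 2 * jacobiP (a + 1) (b + 1) n x) x := by
  have hb' : ∀ m : ℕ, b + 1 + 1 ≠ -m := fun m h ↦ hb (m + 1) (by push_cast; linear_combination h)
  have hab' : ∀ m : ℕ, a + 1 + (b + 1) + 2 ≠ -m := fun m h ↦
    hab (m + 2) (by push_cast; linear_combination h)
  have hinner : HasDerivAt (fun x : ℝ ↦ (x + 1) / 2) (1 / 2) x :=
    ((hasDerivAt_id x).add_const 1).div_const 2
  have hcomp := ((shiftedJacobiPoly a b (n + 1)).hasDerivAt ((x + 1) / 2)).comp x hinner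
  rw [derivative_shiftedJacobiPoly_succ (by simpa using hb 0), eval_mul, eval_C,
    eval_shiftedJacobiPoly hb' hab'] at hcomp
  rw [← funext (eval_shiftedJacobiPoly hb hab (n + 1))]
  exact hcomp.congr_deriv (by ring)

/-- The recursively defined function `jacobiP a b n` as a polynomial; see `eval_jacobiPoly`. -/
noncomputable def jacobiPoly (a b : ℝ) (n : ℕ) : ℝ[X] :=
  (shiftedJacobiPoly a b n).comp (C (1 / 2) * (X + 1))

theorem eval_jacobiPoly (hb : ∀ m : ℕ, b + 1 ≠ -m) (hab : ∀ m : ℕ, a + b + 2 ≠ -m) (n : ℕ)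
    (x : ℝ) : (jacobiPoly a b n).eval x = jacobiP a b n x := by
  rw [← eval_shiftedJacobiPoly hb hab]
  simp [jacobiPoly, div_eq_inv_mul]

theorem natDegree_jacobiPoly_le (a b : ℝ) (n : ℕ) : (jacobiPoly a b n).natDegree ≤ n := by
  have hlinear : (C (1 / 2) * (X + 1) : ℝ[X]).natDegree ≤ 1 := by compute_degree
  calc (jacobiPoly a b n).natDegree
      ≤ (shiftedJacobiPoly a b n).natDegree * (C (1 / 2) * (X + 1) : ℝ[X]).natDegree :=
        natDegree_comp_le
    _ ≤ n * 1 := Nat.mul_le_mul (natDegree_shiftedJacobiPoly_le a b n) hlinear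
    _ = n := mul_one n

end JacobiPolynomial

section GeneralizedLagrange

open Polynomial

theorem eq_C_mul_lagrangeBasis {F ι : Type*} [Field F] [DecidableEq ι] {s : Finset ι} {v : ι → F}
    (hv : Set.InjOn v s) {p : F[X]} (hp : p.degree < #s) {i : ι} (hi : i ∈ s)
    (hroots : ∀ j ∈ s, j ≠ i → p.eval (v j) = 0) :
    p = C (p.eval (v i)) * Lagrange.basis s v i := by
  conv_lhs => rw [Lagrange.eq_interpolate hv hp, Lagrange.interpolate_apply]
  exact sum_eq_single_of_mem i hi fun j hj hji ↦ by rw [hroots j hj hji, C_0, zero_mul]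

variable {u : ℝ → ℝ} {n : ℕ} {x : Fin (n + 1) → ℝ} {j : Fin (n + 1)}

theorem glW_eq_eval_nodal (u : ℝ → ℝ) (x : Fin (n + 1) → ℝ) (t : ℝ) :
    glW u x t = (Lagrange.nodal univ (u ∘ x)).eval (u t) := by
  simp [glW, Lagrange.eval_nodal]

theorem deriv_div_deriv_glW (hu' : deriv u (x j) ≠ 0) :
    deriv u (x j) / deriv (glW u x) (x j) = Lagrange.nodalWeight univ (u ∘ x) j := by
  have hu : HasDerivAt u (deriv u (x j)) (x j) :=
    (differentiableAt_of_deriv_ne_zero hu').hasDerivAt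
  have hw := ((Lagrange.nodal univ (u ∘ x)).hasDerivAt (u (x j))).comp (x j) hu
  have hglW : glW u x = (fun y ↦ (Lagrange.nodal univ (u ∘ x)).eval y) ∘ u :=
    funext (glW_eq_eval_nodal u x)
  rw [hglW, hw.deriv, Lagrange.nodalWeight_eq_eval_derivative_nodal (mem_univ j),
    Function.comp_apply, div_mul_cancel_right₀ hu']

theorem glL_eq_eval_lagrangeBasis (hu' : deriv u (x j) ≠ 0) (t : ℝ) :
    glL u x j t = (Lagrange.basis univ (u ∘ x) j).eval (u t) := by
  rw [glL, deriv_div_deriv_glW hu', Lagrange.nodalWeight, ← prod_mul_distrib, Lagrange.basis,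
    eval_prod]
  simp [Lagrange.basisDivisor]

theorem glL_eq_eval_div_eval (hux : Function.Injective (u ∘ x)) (hu' : deriv u (x j) ≠ 0)
    {p : ℝ[X]} (hp : p.natDegree ≤ n) (hroots : ∀ i ≠ j, p.eval (u (x i)) = 0)
    (hpj : p.eval (u (x j)) ≠ 0) (t : ℝ) :
    glL u x j t = p.eval (u t) / p.eval (u (x j)) := by
  have hdegree : p.degree < #(univ : Finset (Fin (n + 1))) := by
    rw [card_univ, Fintype.card_fin]
    exact degree_le_natDegree.trans_lt (by exact_mod_cast Nat.lt_succ_of_le hp)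
  have hbasis := eq_C_mul_lagrangeBasis hux.injOn hdegree (mem_univ j) fun i _ ↦ hroots i
  rw [glL_eq_eval_lagrangeBasis hu', eq_div_iff hpj, mul_comm]
  conv_rhs => rw [hbasis, eval_mul, eval_C, Function.comp_apply]

theorem glL_eq_jacobiP_div_jacobiNegOne {a b : ℝ} (hb : ∀ m : ℕ, b + 1 ≠ -m)
    (hab : ∀ m : ℕ, a + b + 2 ≠ -m) (hux : Function.Injective (u ∘ x)) (hu' : deriv u (x j) ≠ 0)
    (hj : u (x j) = -1) (hroots : ∀ i ≠ j, jacobiP a b n (u (x i)) = 0) (t : ℝ) :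
    glL u x j t = jacobiP a b n (u t) / jacobiNegOne b n := by
  have hvalue : (jacobiPoly a b n).eval (u (x j)) = jacobiNegOne b n := by
    rw [eval_jacobiPoly hb hab, hj, jacobiP_neg_one hb hab]
  simp only [← eval_jacobiPoly hb hab] at hroots ⊢
  rw [← hvalue]
  exact glL_eq_eval_div_eval hux hu' (natDegree_jacobiPoly_le a b n) hroots
    (hvalue ▸ jacobiNegOne_ne_zero hb n) t

end GeneralizedLagrange

theorem gl_jacobi_radau2_first_column_general {α β : ℝ} (hβ : ∀ m : ℕ, β + 2 ≠ -m)
    (hαβ : ∀ m : ℕ, α + β + 3 ≠ -m) {n : ℕ} (hn : 1 ≤ n) {u : ℝ → ℝ} {x : Fin (n + 1) → ℝ}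
    (hux : Function.Injective (u ∘ x)) (hu' : deriv u (x 0) ≠ 0) (hfirst : u (x 0) = -1)
    (hroots : ∀ i ≠ 0, jacobiP α (β + 1) n (u (x i)) = 0) {t : ℝ}
    (ht : DifferentiableAt ℝ u t) :
    deriv (glL u x 0) t =
      deriv u t * jacobiP (α + 1) (β + 2) (n - 1) (u t) * n.factorial * (α + β + n + 2) *
        Real.Gamma (β + 2) / (2 * (-1) ^ n * Real.Gamma (β + 2 + n)) := by
  have hβ' : β + 1 + 1 = β + 2 := by ring
  have hb : ∀ m : ℕ, β + 1 + 1 ≠ -m := by rwa [hβ']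
  have hab : ∀ m : ℕ, α + (β + 1) + 2 ≠ -m := fun m h ↦ hαβ m (by linear_combination h)
  obtain ⟨m, rfl⟩ := Nat.exists_eq_add_of_le' hn
  have hglL : glL u x 0 = fun t ↦ jacobiP α (β + 1) (m + 1) (u t) / jacobiNegOne (β + 1) (m + 1) :=
    funext (glL_eq_jacobiP_div_jacobiNegOne hb hab hux hu' hfirst hroots)
  have hderiv : HasDerivAt (glL u x 0)
      ((m + α + (β + 1) + 2) / 2 * jacobiP (α + 1) (β + 2) m (u t) * deriv u t /
        jacobiNegOne (β + 1) (m + 1)) t := by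
    rw [hglL, ← hβ']
    exact ((hasDerivAt_jacobiP_succ hb hab m (u t)).comp t ht.hasDerivAt).div_const _
  rw [hderiv.deriv, div_eq_mul_inv _ (jacobiNegOne _ _),
    ← factorial_mul_gamma_div_gamma_add hb (m + 1), hβ', Nat.add_sub_cancel]
  push_cast
  ring

theorem gl_jacobi_radau2_first_column (α β : ℝ) (hα : -1 < α) (hβ : -1 < β)
    (n : ℕ) (hn : 1 ≤ n) (u : ℝ → ℝ) (x : Fin (n + 1) → ℝ)
    (hu : Differentiable ℝ u)
    (hu2 : Differentiable ℝ (deriv u))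
    (hx : Function.Injective x)
    (hux : Function.Injective (u ∘ x))
    (hu' : ∀ i, deriv u (x i) ≠ 0)
    (hfirst : u (x 0) = -1)
    (hroots : ∀ i : Fin (n + 1), 0 < (i : ℕ) → jacobiP α (β + 1) n (u (x i)) = 0)
    (k : Fin (n + 1)) (hk : 1 ≤ (k : ℕ)) :
    deriv (glL u x 0) (x k) =
      deriv u (x k) * jacobiP (α + 1) (β + 2) (n - 1) (u (x k)) * (n.factorial : ℝ) *
        (α + β + (n : ℝ) + 2) * Real.Gamma (β + 2) /
        (2 * (-1 : ℝ) ^ n * Real.Gamma (β + 2 + (n : ℝ))) := by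
  refine gl_jacobi_radau2_first_column_general (fun m ↦ ?_) (fun m ↦ ?_) hn hux (hu' 0) hfirst
    (fun i hi ↦ hroots i (Fin.pos_iff_ne_zero.2 hi)) (hu (x k)) <;>
    linarith [m.cast_nonneg (α := ℝ)]
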